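/- Let (G,c,o) be an infinite recurrent rooted network. Then the set of potentials on (G,c,o), viewed as a subset of ℝ^V with the product topology, is nonempty, compact, and convex. -/

import Mathlib

open scoped ENNReal
open Filter Topology Classical
noncomputable section

/-- A rooted network: a connected, locally finite simple graph with positive
symmetric edge conductances (extended by `0` to non-edges) and a root `o`. -/
structure RootedNetwork (V : Type*) where
  G : SimpleGraph V
  locallyFinite : ∀ x : V, (G.neighborSet x).Finite
  connected : G.Connected
  c : V → V → ℝ
  c_symm : ∀ x y, c x y = c y x
  c_pos : ∀ x y, G.Adj x y → 0 < c x y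
  c_eq_zero : ∀ x y, ¬ G.Adj x y → c x y = 0
  o : V

namespace RootedNetwork

variable {V : Type*}

/-- The vertex weight `c_x = Σ_{z ∼ x} c_{xz}`. -/
noncomputable def cv (N : RootedNetwork V) (x : V) : ℝ := ∑' y, N.c x y

/-- The transition probability `p(x,y) = c_{xy} / c_x` of the network random walk. -/
noncomputable def p (N : RootedNetwork V) (x y : V) : ℝ≥0∞ :=
  ENNReal.ofReal (N.c x y / N.cv x)

/-- The probability that the network random walk started at `x` begins with the
given finite sequence of steps. -/
noncomputable def pathProb (N : RootedNetwork V) : V → List V → ℝ≥0∞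
  | _, [] => 1
  | x, y :: l => N.p x y * pathProb N y l

/-- The probability, starting from `x`, that the walk ever visits `b`
(`P_x(τ_b < ∞)`), computed by decomposing over the finite path up to the first
visit of `b`. -/
noncomputable def hitProb (N : RootedNetwork V) (x b : V) : ℝ≥0∞ :=
  if x = b then 1
  else ∑' l : {l : List V // l.getLast? = some b ∧ b ∉ l.dropLast}, N.pathProb x l.1

/-- A rooted network is recurrent if the walk started from any vertex almost
surely visits the root `o`. -/
def Recurrent (N : RootedNetwork V) : Prop := ∀ x : V, N.hitProb x N.o = 1

/-- The Green kernel `G_o(x,y) = Σ_{n ≥ 0} P_x(X_n = y, τ_o > n)` of the walk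
killed at the root, computed as a sum over finite paths from `x` to `y`
avoiding `o` (the `n = 0` term is the first summand). -/
noncomputable def GreenKer (N : RootedNetwork V) (x y : V) : ℝ≥0∞ :=
  (if x = y ∧ x ≠ N.o then 1 else 0) +
    ∑' l : {l : List V // l.getLast? = some y ∧ N.o ∉ x :: l}, N.pathProb x l.1

/-- The Green density `g_o(x,y) = G_o(x,y) / c_y`. -/
noncomputable def greenDensity (N : RootedNetwork V) (x y : V) : ℝ≥0∞ :=
  N.GreenKer x y / ENNReal.ofReal (N.cv y)

/-- The network Laplacian `Δ f (v) = Σ_{x ∼ v} c_{vx} (f(x) - f(v))`. -/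
noncomputable def lap (N : RootedNetwork V) (f : V → ℝ) (v : V) : ℝ :=
  ∑' x, N.c v x * (f x - f v)

/-- A potential: a nonnegative function vanishing at `o`, with Laplacian `1`
at `o`, harmonic everywhere else. -/
def IsPotential (N : RootedNetwork V) (h : V → ℝ) : Prop :=
  (∀ v, 0 ≤ h v) ∧ h N.o = 0 ∧ N.lap h N.o = 1 ∧ ∀ v, v ≠ N.o → N.lap h v = 0

end RootedNetwork

/-!
Exhaust the network by finite vertex sets `B ∋ o`. By the maximum principle the Dirichlet problem
`Δ g = δ_o` on `B`, `g = 0` off `B`, has a unique solution, and `h = g - g o` is nonnegative,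
vanishes at `o` and satisfies `Δ h ≤ δ_o` on the whole network, with equality on `B`. Nonnegative
functions vanishing at `o` with `Δ h ≤ δ_o` are bounded at every vertex by a Harnack inequality
along a path from `o`, so they form a compact set, in which the conditions `Δ h v = δ_o v` have the
finite intersection property.
-/

namespace RootedNetwork

variable {V : Type*} (N : RootedNetwork V)

section Laplacian

lemma c_nonneg (x y : V) : 0 ≤ N.c x y := by
  by_cases hxy : N.G.Adj x y
  · exact (N.c_pos x y hxy).le
  · exact (N.c_eq_zero x y hxy).ge

lemma c_eq_zero_of_notMem_toFinset {v x : V} (hx : x ∉ (N.locallyFinite v).toFinset) :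
    N.c v x = 0 :=
  N.c_eq_zero v x (by simpa using hx)

lemma cv_eq_sum (v : V) : N.cv v = ∑ x ∈ (N.locallyFinite v).toFinset, N.c v x :=
  tsum_eq_sum fun _ hx ↦ N.c_eq_zero_of_notMem_toFinset hx

lemma cv_nonneg (v : V) : 0 ≤ N.cv v :=
  tsum_nonneg (N.c_nonneg v)

lemma lap_eq_sum (f : V → ℝ) (v : V) :
    N.lap f v = ∑ x ∈ (N.locallyFinite v).toFinset, N.c v x * (f x - f v) :=
  tsum_eq_sum fun x hx ↦ by rw [N.c_eq_zero_of_notMem_toFinset hx, zero_mul]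

lemma lap_eq_sum_sub_cv_mul (f : V → ℝ) (v : V) :
    N.lap f v = ∑ x ∈ (N.locallyFinite v).toFinset, N.c v x * f x - N.cv v * f v := by
  simp only [lap_eq_sum, cv_eq_sum, Finset.sum_mul, ← Finset.sum_sub_distrib, mul_sub]

/-- The network Laplacian as a linear operator on `ℝ^V`. -/
def lapLinearMap : (V → ℝ) →ₗ[ℝ] (V → ℝ) where
  toFun := N.lap
  map_add' f g := by
    ext v
    simp only [lap_eq_sum, Pi.add_apply, ← Finset.sum_add_distrib]
    exact Finset.sum_congr rfl fun x _ ↦ by ring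
  map_smul' r f := by
    ext v
    simp only [lap_eq_sum, Pi.smul_apply, smul_eq_mul, RingHom.id_apply, Finset.mul_sum]
    exact Finset.sum_congr rfl fun x _ ↦ by ring

lemma lap_neg (f : V → ℝ) : N.lap (-f) = -N.lap f :=
  map_neg N.lapLinearMap f

lemma lap_sub_const (f : V → ℝ) (r : ℝ) : N.lap (fun x ↦ f x - r) = N.lap f := by
  ext v
  simp only [lap, sub_sub_sub_cancel_right]

lemma continuous_lap : Continuous N.lap := by
  refine continuous_pi fun v ↦ ?_
  simp only [lap_eq_sum]
  fun_prop

end Laplacian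

section MaximumPrinciple

lemma lap_nonpos_of_forall_le {f : V → ℝ} {v : V} (hmax : ∀ x, f x ≤ f v) : N.lap f v ≤ 0 :=
  tsum_nonpos fun x ↦
    mul_nonpos_of_nonneg_of_nonpos (N.c_nonneg v x) (sub_nonpos.2 (hmax x))

lemma eq_of_adj_of_forall_le_of_lap_nonneg {f : V → ℝ} {v w : V} (hmax : ∀ x, f x ≤ f v)
    (hlap : 0 ≤ N.lap f v) (hvw : N.G.Adj v w) : f w = f v := by
  have hterm : ∀ x ∈ (N.locallyFinite v).toFinset, N.c v x * (f x - f v) ≤ 0 := fun x _ ↦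
    mul_nonpos_of_nonneg_of_nonpos (N.c_nonneg v x) (sub_nonpos.2 (hmax x))
  have hsum : ∑ x ∈ (N.locallyFinite v).toFinset, N.c v x * (f x - f v) = 0 :=
    (Finset.sum_nonpos hterm).antisymm (N.lap_eq_sum f v ▸ hlap)
  have hw : N.c v w * (f w - f v) = 0 :=
    (Finset.sum_eq_zero_iff_of_nonpos hterm).1 hsum w (by simpa using hvw)
  exact sub_eq_zero.1 ((mul_eq_zero.1 hw).resolve_left (N.c_pos v w hvw).ne')

variable {B : Finset V} {f : V → ℝ} {r : ℝ}

theorem le_of_forall_notMem_le_of_lap_nonneg (hB : ∃ v, v ∉ B) (hout : ∀ v ∉ B, f v ≤ r)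
    (hlap : ∀ v ∈ B, 0 ≤ N.lap f v) (x : V) : f x ≤ r := by
  by_contra! hx
  have mem_of_lt {v : V} (hv : r < f v) : v ∈ B := by
    by_contra hvB
    exact (hout v hvB).not_gt hv
  obtain ⟨m, -, hmB⟩ := B.exists_max_image f ⟨x, mem_of_lt hx⟩
  have hm : r < f m := hx.trans_le (hmB x (mem_of_lt hx))
  have hmax (v : V) : f v ≤ f m := by
    by_cases hv : v ∈ B
    · exact hmB v hv
    · exact (hout v hv).trans hm.le
  have hconst (v : V) : f v = f m := by
    induction (N.G.reachable_iff_reflTransGen m v).1 (N.connected m v) with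
    | refl => rfl
    | @tail u w _ huw hu =>
      have huB : u ∈ B := mem_of_lt (hm.trans_eq hu.symm)
      exact (N.eq_of_adj_of_forall_le_of_lap_nonneg (hu ▸ hmax) (hlap u huB) huw).trans hu
  obtain ⟨z, hz⟩ := hB
  exact hz (mem_of_lt (hm.trans_eq (hconst z).symm))

theorem ge_of_forall_notMem_ge_of_lap_nonpos (hB : ∃ v, v ∉ B) (hout : ∀ v ∉ B, r ≤ f v)
    (hlap : ∀ v ∈ B, N.lap f v ≤ 0) (x : V) : r ≤ f x := by
  refine neg_le_neg_iff.1 (N.le_of_forall_notMem_le_of_lap_nonneg hB (f := -f) (r := -r)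
    (fun v hv ↦ neg_le_neg (hout v hv)) (fun v hv ↦ ?_) x)
  rw [lap_neg]
  exact neg_nonneg.2 (hlap v hv)

end MaximumPrinciple

section DirichletProblem

/-- The Laplacian with zero boundary values off `B`: extend a function on `B` by zero, apply the
network Laplacian, and restrict to `B`. -/
def dirichletLap (B : Finset V) : (B → ℝ) →ₗ[ℝ] (B → ℝ) :=
  LinearMap.funLeft ℝ ℝ Subtype.val ∘ₗ N.lapLinearMap ∘ₗ
    Function.ExtendByZero.linearMap ℝ Subtype.val

variable {B : Finset V}

lemma extend_val_eq_zero_of_notMem (f : B → ℝ) {v : V} (hv : v ∉ B) :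
    Function.extend Subtype.val f 0 v = 0 :=
  Function.extend_apply' _ _ _ fun ⟨u, hu⟩ ↦ hv (hu ▸ u.2)

lemma dirichletLap_injective (hB : ∃ v, v ∉ B) : Function.Injective (N.dirichletLap B) := by
  refine (injective_iff_map_eq_zero _).2 fun f hf ↦ funext fun v ↦ ?_
  have hlap (u : V) (hu : u ∈ B) : N.lap (Function.extend Subtype.val f 0) u = 0 :=
    congrFun hf ⟨u, hu⟩
  rw [← Subtype.val_injective.extend_apply f 0 v]
  exact le_antisymm
    (N.le_of_forall_notMem_le_of_lap_nonneg hB (fun u hu ↦ (extend_val_eq_zero_of_notMem f hu).le)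
      (fun u hu ↦ (hlap u hu).ge) v)
    (N.ge_of_forall_notMem_ge_of_lap_nonpos hB (fun u hu ↦ (extend_val_eq_zero_of_notMem f hu).ge)
      (fun u hu ↦ (hlap u hu).le) v)

theorem exists_eq_zero_off_lap_eqOn (hB : ∃ v, v ∉ B) (b : V → ℝ) :
    ∃ g : V → ℝ, (∀ v ∉ B, g v = 0) ∧ Set.EqOn (N.lap g) b B := by
  obtain ⟨g, hg⟩ := LinearMap.injective_iff_surjective.1 (N.dirichletLap_injective hB)
    fun v ↦ b v
  exact ⟨Function.extend Subtype.val g 0, fun v hv ↦ extend_val_eq_zero_of_notMem g hv,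
    fun v hv ↦ congrFun hg ⟨v, hv⟩⟩

end DirichletProblem

section Supersolutions

/-- The nonnegative supersolutions of `Δ h = b` that vanish at `a`. With `a = o` and `b = δ_o` this
set contains the potentials as well as their approximations by Dirichlet problems. -/
def supersolutions (a : V) (b : V → ℝ) : Set (V → ℝ) :=
  {h | 0 ≤ h ∧ h a = 0 ∧ N.lap h ≤ b}

variable {N} in
lemma c_mul_le_lap_add_cv_mul_of_adj {h : V → ℝ} (hnonneg : 0 ≤ h) {u w : V} (huw : N.G.Adj u w) :
    N.c u w * h w ≤ N.lap h u + N.cv u * h u := by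
  rw [lap_eq_sum_sub_cv_mul, sub_add_cancel]
  exact Finset.single_le_sum (f := fun x ↦ N.c u x * h x)
    (fun x _ ↦ mul_nonneg (N.c_nonneg u x) (hnonneg x)) (by simpa using huw)

variable (a : V) (b : V → ℝ)

lemma bddAbove_supersolutions : BddAbove (N.supersolutions a b) := by
  refine bddAbove_pi.2 fun x ↦ ?_
  induction (N.G.reachable_iff_reflTransGen a x).1 (N.connected a x) with
  | refl => exact ⟨0, Set.forall_mem_image.2 fun h hh ↦ hh.2.1.le⟩
  | @tail u w _ huw hu =>
    obtain ⟨M, hM⟩ := hu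
    refine ⟨(b u + N.cv u * M) / N.c u w, Set.forall_mem_image.2 fun h hh ↦ ?_⟩
    have hhu : h u ≤ M := hM (Set.mem_image_of_mem _ hh)
    refine (le_div_iff₀' (N.c_pos u w huw)).2 ?_
    calc N.c u w * h w ≤ N.lap h u + N.cv u * h u := c_mul_le_lap_add_cv_mul_of_adj hh.1 huw
      _ ≤ b u + N.cv u * M :=
        add_le_add (hh.2.2 u) (mul_le_mul_of_nonneg_left hhu (N.cv_nonneg u))

lemma isClosed_supersolutions : IsClosed (N.supersolutions a b) :=
  (isClosed_le continuous_const continuous_id).inter <|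
    (isClosed_eq (continuous_apply a) continuous_const).inter <|
      isClosed_le N.continuous_lap continuous_const

lemma isCompact_supersolutions : IsCompact (N.supersolutions a b) := by
  obtain ⟨M, hM⟩ := N.bddAbove_supersolutions a b
  exact isCompact_Icc.of_isClosed_subset (N.isClosed_supersolutions a b)
    fun h hh ↦ ⟨hh.1, hM hh⟩

lemma convex_supersolutions : Convex ℝ (N.supersolutions a b) :=
  (convex_Ici 0).inter <|
    ((convex_singleton 0).linear_preimage (LinearMap.proj a)).inter <|
      (convex_Iic b).linear_preimage N.lapLinearMap

variable {a} {B : Finset V}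

theorem exists_mem_supersolutions_lap_eqOn (hB : ∃ v, v ∉ B) (ha : a ∈ B) :
    ∃ h ∈ N.supersolutions a (Pi.single a 1), Set.EqOn (N.lap h) (Pi.single a 1) B := by
  obtain ⟨g, hg0, hg⟩ := N.exists_eq_zero_off_lap_eqOn hB (Pi.single a 1)
  have hδ : (0 : V → ℝ) ≤ Pi.single a 1 := Pi.single_nonneg.2 zero_le_one
  have hg_nonpos : ∀ x, g x ≤ 0 :=
    N.le_of_forall_notMem_le_of_lap_nonneg hB (fun v hv ↦ (hg0 v hv).le)
      fun v hv ↦ (hδ v).trans_eq (hg hv).symm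
  have hg_min : ∀ x, g a ≤ g x := by
    refine N.ge_of_forall_notMem_ge_of_lap_nonpos (B := B.erase a)
      (hB.imp fun v hv ↦ mt Finset.mem_of_mem_erase hv) (fun v hv ↦ ?_) (fun v hv ↦ ?_)
    · obtain rfl | hva := eq_or_ne v a
      · rfl
      · exact (hg_nonpos a).trans_eq (hg0 v fun hvB ↦ hv (Finset.mem_erase.2 ⟨hva, hvB⟩)).symm
    · obtain ⟨hva, hvB⟩ := Finset.mem_erase.1 hv
      rw [hg hvB, Pi.single_eq_of_ne hva]
  have hg_lap : N.lap g ≤ Pi.single a 1 := fun v ↦ by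
    by_cases hv : v ∈ B
    · exact (hg hv).le
    · exact (N.lap_nonpos_of_forall_le fun x ↦ (hg_nonpos x).trans_eq (hg0 v hv).symm).trans (hδ v)
  have hlap : N.lap (fun x ↦ g x - g a) = N.lap g := N.lap_sub_const g (g a)
  exact ⟨fun x ↦ g x - g a, ⟨fun x ↦ sub_nonneg.2 (hg_min x), sub_self _, hlap.trans_le hg_lap⟩,
    hlap ▸ hg⟩

end Supersolutions

section Potentials

lemma setOf_isPotential_eq : {h | N.IsPotential h} =
    N.supersolutions N.o (Pi.single N.o 1) ∩
      ⋂ v, {h | N.lap h v = (Pi.single N.o 1 : V → ℝ) v} := by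
  ext h
  simp only [Set.mem_inter_iff, Set.mem_iInter, Set.mem_ofPred_eq]
  constructor
  · rintro ⟨hnonneg, ho, hlapo, hlap⟩
    have heq (v : V) : N.lap h v = (Pi.single N.o 1 : V → ℝ) v := by
      obtain rfl | hv := eq_or_ne v N.o
      · rw [hlapo, Pi.single_eq_same]
      · rw [hlap v hv, Pi.single_eq_of_ne hv]
    exact ⟨⟨hnonneg, ho, fun v ↦ (heq v).le⟩, heq⟩
  · rintro ⟨⟨hnonneg, ho, -⟩, heq⟩
    exact ⟨hnonneg, ho, by rw [heq, Pi.single_eq_same],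
      fun v hv ↦ by rw [heq, Pi.single_eq_of_ne hv]⟩

lemma isClosed_setOf_lap_apply_eq (v : V) (r : ℝ) : IsClosed {h | N.lap h v = r} :=
  isClosed_eq ((continuous_apply v).comp N.continuous_lap) continuous_const

theorem nonempty_setOf_isPotential [Infinite V] : {h | N.IsPotential h}.Nonempty := by
  rw [setOf_isPotential_eq]
  refine (N.isCompact_supersolutions _ _).inter_iInter_nonempty _
    (fun v ↦ N.isClosed_setOf_lap_apply_eq v _) fun B ↦ ?_
  obtain ⟨h, hsuper, hlap⟩ := N.exists_mem_supersolutions_lap_eqOn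
    (Infinite.exists_notMem_finset (insert N.o B)) (Finset.mem_insert_self N.o B)
  exact ⟨h, hsuper, Set.mem_iInter₂.2 fun v hv ↦ hlap (Finset.mem_insert_of_mem hv)⟩

theorem isCompact_setOf_isPotential : IsCompact {h | N.IsPotential h} := by
  rw [setOf_isPotential_eq]
  exact (N.isCompact_supersolutions _ _).inter_right
    (isClosed_iInter fun v ↦ N.isClosed_setOf_lap_apply_eq v _)

theorem convex_setOf_isPotential : Convex ℝ {h | N.IsPotential h} := by
  rw [setOf_isPotential_eq]
  exact (N.convex_supersolutions _ _).inter <| convex_iInter fun v ↦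
    (convex_singleton _).linear_preimage (LinearMap.proj v ∘ₗ N.lapLinearMap)

end Potentials

end RootedNetwork

theorem potentials_nonempty_compact_convex_general {V : Type*} [Infinite V]
    (N : RootedNetwork V) :
    {h : V → ℝ | N.IsPotential h}.Nonempty ∧
    IsCompact {h : V → ℝ | N.IsPotential h} ∧
    Convex ℝ {h : V → ℝ | N.IsPotential h} :=
  ⟨N.nonempty_setOf_isPotential, N.isCompact_setOf_isPotential, N.convex_setOf_isPotential⟩

/-- On an infinite recurrent rooted network, the set of potentials is a
nonempty, compact, convex subset of `ℝ^V` with the product topology. -/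
theorem potentials_nonempty_compact_convex {V : Type*} [Infinite V]
    (N : RootedNetwork V) (hrec : N.Recurrent) :
    {h : V → ℝ | N.IsPotential h}.Nonempty ∧
    IsCompact {h : V → ℝ | N.IsPotential h} ∧
    Convex ℝ {h : V → ℝ | N.IsPotential h} := by
  exact potentials_nonempty_compact_convex_general N
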